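/- For every nonzero y ∈ Ĥ, the closed disc {λ ∈ ℂ : |λ| ≤ R₂⁻(S_u)} is contained in the local spectrum σ_{S_u}(y). In particular, if r(S_u) = R₂⁻(S_u), then S_u has fat local spectra: σ_{S_u}(y) = σ(S_u) for every nonzero y ∈ Ĥ. -/

import Mathlib

open Filter Topology ENNReal

noncomputable section

/-- The local resolvent set of `T` at `x`. -/
def localResolventSet {E : Type*} [NormedAddCommGroup E] [NormedSpace ℂ E]
    (T : E →L[ℂ] E) (x : E) : Set ℂ :=
  {l : ℂ | ∃ U : Set ℂ, IsOpen U ∧ l ∈ U ∧ ∃ f : ℂ → E, AnalyticOnNhd ℂ f U ∧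
    ∀ m ∈ U, T (f m) - m • f m = x}

/-- The local spectrum of `T` at `x`. -/
def localSpectrum {E : Type*} [NormedAddCommGroup E] [NormedSpace ℂ E]
    (T : E →L[ℂ] E) (x : E) : Set ℂ :=
  (localResolventSet T x)ᶜ

/-- The local spectral radius of `T` at `x`: `limsup ‖Tⁿx‖^{1/n}`. -/
def localSpecRad {E : Type*} [NormedAddCommGroup E] [NormedSpace ℂ E]
    (T : E →L[ℂ] E) (x : E) : ℝ≥0∞ :=
  limsup (fun n : ℕ => (‖(T ^ n) x‖₊ : ℝ≥0∞) ^ (1 / n : ℝ)) atTop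

/-- The lower bound `m(T) = inf {‖Tx‖ : ‖x‖ = 1}` of an operator. -/
def lowerBound {E : Type*} [NormedAddCommGroup E] [NormedSpace ℂ E]
    (T : E →L[ℂ] E) : ℝ :=
  sInf ((fun x => ‖T x‖) '' {x : E | ‖x‖ = 1})

/-- `r₁(T) = lim m(Tⁿ)^{1/n} = sup_{n ≥ 1} m(Tⁿ)^{1/n}`. -/
def r1 {E : Type*} [NormedAddCommGroup E] [NormedSpace ℂ E]
    (T : E →L[ℂ] E) : ℝ≥0∞ :=
  ⨆ n : ℕ, ENNReal.ofReal (lowerBound (T ^ (n + 1))) ^ (1 / (n + 1) : ℝ)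

/-- The point spectrum: the set of eigenvalues. -/
def pointSpectrum {E : Type*} [NormedAddCommGroup E] [NormedSpace ℂ E]
    (T : E →L[ℂ] E) : Set ℂ :=
  {l : ℂ | ∃ x : E, x ≠ 0 ∧ T x = l • x}

/-- The set of points where `T` fails the single-valued extension property. -/
def svepFails {E : Type*} [NormedAddCommGroup E] [NormedSpace ℂ E]
    (T : E →L[ℂ] E) : Set ℂ :=
  {l₀ : ℂ | ¬ ∀ r : ℝ, 0 < r → ∀ f : ℂ → E, AnalyticOnNhd ℂ f (Metric.ball l₀ r) →
      (∀ m ∈ Metric.ball l₀ r, T (f m) - m • f m = 0) →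
      ∀ m ∈ Metric.ball l₀ r, f m = 0}

/-- Dunford's condition (C). -/
def DunfordC {E : Type*} [NormedAddCommGroup E] [NormedSpace ℂ E]
    (T : E →L[ℂ] E) : Prop :=
  ∀ F : Set ℂ, IsClosed F → IsClosed {y : E | localSpectrum T y ⊆ F}

/-- Bishop's property (β). -/
def BishopBeta {E : Type*} [NormedAddCommGroup E] [NormedSpace ℂ E]
    (T : E →L[ℂ] E) : Prop :=
  ∀ U : Set ℂ, IsOpen U → ∀ f : ℕ → ℂ → E,
    (∀ m, AnalyticOnNhd ℂ (f m) U) →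
    TendstoLocallyUniformlyOn (fun m z => T (f m z) - z • f m z) 0 atTop U →
    TendstoLocallyUniformlyOn f 0 atTop U

section Shift

variable {H : Type*} [NormedAddCommGroup H] [InnerProductSpace ℂ H] [CompleteSpace H]

/-- `wB A n = B_n = A_{n-1} ⋯ A_1 A_0`, with `B_0 = 1`. -/
def wB (A : ℕ → (H →L[ℂ] H)ˣ) : ℕ → (H →L[ℂ] H)ˣ
  | 0 => 1
  | n + 1 => A n * wB A n

/-- `wBi A n = B_n⁻¹` as an operator. -/
def wBi (A : ℕ → (H →L[ℂ] H)ˣ) (n : ℕ) : H →L[ℂ] H :=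
  (((wB A n)⁻¹ : (H →L[ℂ] H)ˣ) : H →L[ℂ] H)

/-- `R₂⁺(S_u) = sup_{x ≠ 0} 1 / limsup ‖(B_n*)⁻¹ x‖^{1/n}` (with `1/0 = ∞`). -/
def R2plus (A : ℕ → (H →L[ℂ] H)ˣ) : ℝ≥0∞ :=
  ⨆ (x : H) (_ : x ≠ 0),
    (limsup (fun n : ℕ =>
      (‖ContinuousLinearMap.adjoint (wBi A n) x‖₊ : ℝ≥0∞) ^ (1 / n : ℝ)) atTop)⁻¹

/-- `R₂⁻(S_u) = inf_{x ≠ 0} 1 / limsup ‖(B_n*)⁻¹ x‖^{1/n}` (with `1/0 = ∞`). -/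
def R2minus (A : ℕ → (H →L[ℂ] H)ˣ) : ℝ≥0∞ :=
  ⨅ (x : H) (_ : x ≠ 0),
    (limsup (fun n : ℕ =>
      (‖ContinuousLinearMap.adjoint (wBi A n) x‖₊ : ℝ≥0∞) ^ (1 / n : ℝ)) atTop)⁻¹

/-- `R₃⁺(S_u) = sup_{x ≠ 0} limsup ‖B_n x‖^{1/n}`. -/
def R3plus (A : ℕ → (H →L[ℂ] H)ˣ) : ℝ≥0∞ :=
  ⨆ (x : H) (_ : x ≠ 0),
    limsup (fun n : ℕ => (‖(wB A n : H →L[ℂ] H) x‖₊ : ℝ≥0∞) ^ (1 / n : ℝ)) atTop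

/-- `R₃⁻(S_u) = inf_{x ≠ 0} limsup ‖B_n x‖^{1/n}`. -/
def R3minus (A : ℕ → (H →L[ℂ] H)ˣ) : ℝ≥0∞ :=
  ⨅ (x : H) (_ : x ≠ 0),
    limsup (fun n : ℕ => (‖(wB A n : H →L[ℂ] H) x‖₊ : ℝ≥0∞) ^ (1 / n : ℝ)) atTop

/-- `r₂(S_u) = 1 / limsup ‖B_n⁻¹‖^{1/n}` (with `1/0 = ∞`). -/
def r2 (A : ℕ → (H →L[ℂ] H)ˣ) : ℝ≥0∞ :=
  (limsup (fun n : ℕ => (‖wBi A n‖₊ : ℝ≥0∞) ^ (1 / n : ℝ)) atTop)⁻¹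

/-- `r₃(S_u) = 1 / liminf ‖B_n⁻¹‖^{1/n}` (with `1/0 = ∞`). -/
def r3 (A : ℕ → (H →L[ℂ] H)ˣ) : ℝ≥0∞ :=
  (liminf (fun n : ℕ => (‖wBi A n‖₊ : ℝ≥0∞) ^ (1 / n : ℝ)) atTop)⁻¹

/-- `R_𝒜(x) = 1 / limsup ‖B_n⁻¹ x_n‖^{1/n}` (with `1/0 = ∞`). -/
def RA (A : ℕ → (H →L[ℂ] H)ˣ) (x : lp (fun _ : ℕ => H) 2) : ℝ≥0∞ :=
  (limsup (fun n : ℕ => (‖wBi A n (x n)‖₊ : ℝ≥0∞) ^ (1 / n : ℝ)) atTop)⁻¹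

end Shift

/-!
For `‖μ‖ < R₂⁻` and `x ≠ 0`, the functional `v ↦ ∑ μⁿ ⟪x, Bₙ⁻¹ vₙ⟫` is an eigenvector of the dual of
`S` with eigenvalue `μ`, so it vanishes on the range of `S - μ`. If `y` lies in that range for all
`μ` near some `μ₀` in the open disc, then the power series `∑ μⁿ ⟪x, Bₙ⁻¹ yₙ⟫` vanishes near `μ₀`,
hence identically, and varying `x` gives `y = 0`. Local spectra are closed, which gives the closed
disc as long as `R₂⁻ > 0`. The point `0` needs its own argument: if it is in the local resolvent set
of `y`, then `y = S z` with `0` again in the local resolvent set of `z`, so `y ∈ ⋂ₙ ran Sⁿ = 0`.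
-/

lemma frequently_norm_lt_norm {V : Type*} [NormedAddCommGroup V] [NormedSpace ℝ V] [Nontrivial V]
    (v : V) : ∃ᶠ w in 𝓝 v, ‖v‖ < ‖w‖ := by
  have not_mem_interior : v ∉ interior (Metric.closedBall 0 ‖v‖) := by
    simp [interior_closedBall']
  rw [mem_interior_iff_mem_nhds] at not_mem_interior
  intro eventually_le
  exact not_mem_interior (eventually_le.mono fun w hw => by simpa using hw)

section PowerSeries

variable {E : Type*} [NormedAddCommGroup E] [NormedSpace ℂ E]

/-- The power series `∑ zⁿ • aₙ` with prescribed vector coefficients, as a formal multilinear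
series in one complex variable. -/
def seriesOfCoeff (a : ℕ → E) : FormalMultilinearSeries ℂ ℂ E :=
  fun n => ContinuousMultilinearMap.mkPiRing ℂ (Fin n) (a n)

@[simp]
lemma coeff_seriesOfCoeff (a : ℕ → E) (n : ℕ) : (seriesOfCoeff a).coeff n = a n := by
  simp [seriesOfCoeff, FormalMultilinearSeries.coeff]

lemma radius_seriesOfCoeff (a : ℕ → E) :
    (seriesOfCoeff a).radius =
      (limsup (fun n : ℕ => (‖a n‖₊ : ℝ≥0∞) ^ (1 / n : ℝ)) atTop)⁻¹ := by
  have norm_eq (n : ℕ) : ‖seriesOfCoeff a n‖₊ = ‖a n‖₊ := NNReal.eq (by simp)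
  have coe_rpow (n : ℕ) : ((‖a n‖₊ ^ (1 / n : ℝ) : NNReal) : ℝ≥0∞) =
      (‖a n‖₊ : ℝ≥0∞) ^ (1 / n : ℝ) := ENNReal.coe_rpow_of_nonneg _ (by positivity)
  rw [← inv_inv (seriesOfCoeff a).radius, FormalMultilinearSeries.radius_inv_eq_limsup]
  simp only [norm_eq, coe_rpow]

lemma nnnorm_le_radius_seriesOfCoeff {a : ℕ → E} {w : ℂ} (hw : Summable fun n => w ^ n • a n) :
    (‖w‖₊ : ℝ≥0∞) ≤ (seriesOfCoeff a).radius := by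
  refine (seriesOfCoeff a).le_radius_of_tendsto (l := 0) ?_
  simpa [norm_smul, mul_comm] using hw.tendsto_atTop_zero.norm

theorem eq_zero_of_eventually_hasSum_zero [CompleteSpace E] {a : ℕ → E} {z₀ : ℂ}
    (h : ∀ᶠ z in 𝓝 z₀, HasSum (fun n => z ^ n • a n) 0) (n : ℕ) : a n = 0 := by
  set p := seriesOfCoeff a with hp
  obtain ⟨w, hz₀w, hw⟩ := ((frequently_norm_lt_norm z₀).and_eventually h).exists
  have radius_gt : (‖z₀‖₊ : ℝ≥0∞) < p.radius :=
    (ENNReal.coe_lt_coe.2 hz₀w).trans_le (nnnorm_le_radius_seriesOfCoeff hw.summable)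
  have radius_pos : 0 < p.radius := bot_le.trans_lt radius_gt
  have hsum : HasFPowerSeriesOnBall p.sum p 0 p.radius := p.hasFPowerSeriesOnBall radius_pos
  have sum_eventually_zero : p.sum =ᶠ[𝓝 z₀] 0 := by
    filter_upwards [h] with z hz
    simpa [FormalMultilinearSeries.sum, hp] using hz.tsum_eq
  have sum_eqOn_zero : Set.EqOn p.sum 0 (Metric.eball 0 p.radius) :=
    hsum.analyticOnNhd.eqOn_zero_of_preconnected_of_eventuallyEq_zero
      (convex_eball _ _).isPreconnected (mem_eball_zero_iff.2 radius_gt) sum_eventually_zero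
  have p_eq_zero : p = 0 := (hsum.hasFPowerSeriesAt.congr
    (sum_eqOn_zero.eventuallyEq_of_mem (Metric.eball_mem_nhds _ radius_pos))).eq_zero
  rw [← coeff_seriesOfCoeff a n, ← hp, FormalMultilinearSeries.coeff_eq_zero, p_eq_zero]
  rfl

end PowerSeries

section LocalSpectrum

variable {E : Type*} [NormedAddCommGroup E] [NormedSpace ℂ E]

lemma isOpen_localResolventSet (T : E →L[ℂ] E) (y : E) : IsOpen (localResolventSet T y) :=
  isOpen_iff_forall_mem_open.2 fun _ ⟨U, hU, hlU, hf⟩ => ⟨U, fun _ hm => ⟨U, hU, hm, hf⟩, hU, hlU⟩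

lemma isClosed_localSpectrum (T : E →L[ℂ] E) (y : E) : IsClosed (localSpectrum T y) :=
  (isOpen_localResolventSet T y).isClosed_compl

lemma exists_apply_sub_smul_eq_of_mem_localResolventSet {T : E →L[ℂ] E} {y : E} {l : ℂ}
    (hl : l ∈ localResolventSet T y) : ∃ v, T v - l • v = y :=
  let ⟨_, _, hlU, f, _, hf⟩ := hl
  ⟨f l, hf l hlU⟩

lemma apply_dslope_sub_smul_dslope {T : E →L[ℂ] E} {y : E} {U : Set ℂ} (hU : IsOpen U)
    {f : ℂ → E} (hfU : AnalyticOnNhd ℂ f U) (hf : ∀ m ∈ U, T (f m) - m • f m = y)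
    {l m : ℂ} (hl : l ∈ U) (hm : m ∈ U) :
    T (dslope f l m) - m • dslope f l m = f l := by
  rcases eq_or_ne m l with rfl | hne
  · have hf' : HasDerivAt f (deriv f m) m := (hfU m hm).differentiableAt.hasDerivAt
    have deriv_lhs := (T.hasFDerivAt.comp_hasDerivAt m hf').sub ((hasDerivAt_id m).smul hf')
    have deriv_rhs : HasDerivAt (fun k => T (f k) - k • f k) 0 m :=
      (hasDerivAt_const m y).congr_of_eventuallyEq
        (Set.EqOn.eventuallyEq_of_mem hf (hU.mem_nhds hm))
    rw [dslope_same]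
    simpa [sub_add_eq_sub_sub, sub_eq_zero] using deriv_lhs.unique deriv_rhs
  · refine smul_right_injective E (sub_ne_zero.2 hne) ?_
    calc (m - l) • (T (dslope f l m) - m • dslope f l m)
        = T (f m - f l) - m • (f m - f l) := by
          rw [← sub_smul_dslope, map_smul, smul_sub, smul_comm m]
      _ = (T (f m) - m • f m) - (T (f l) - l • f l) + (m - l) • f l := by
          rw [map_sub]; module
      _ = (m - l) • f l := by rw [hf m hm, hf l hl, sub_self, zero_add]

variable [CompleteSpace E]

theorem exists_mem_localResolventSet_apply_sub_smul_eq {T : E →L[ℂ] E} {y : E} {l : ℂ}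
    (hl : l ∈ localResolventSet T y) : ∃ z, l ∈ localResolventSet T z ∧ T z - l • z = y := by
  obtain ⟨U, hU, hlU, f, hfU, hf⟩ := hl
  have dslope_analytic : AnalyticOnNhd ℂ (dslope f l) U :=
    ((Complex.differentiableOn_dslope (hU.mem_nhds hlU)).2 hfU.differentiableOn).analyticOnNhd hU
  exact ⟨f l, ⟨U, hU, hlU, dslope f l, dslope_analytic,
    fun m hm => apply_dslope_sub_smul_dslope hU hfU hf hlU hm⟩, hf l hlU⟩

theorem localSpectrum_subset_spectrum (T : E →L[ℂ] E) (y : E) :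
    localSpectrum T y ⊆ spectrum ℂ T := by
  refine Set.compl_subset_compl.2 fun l hl => ?_
  refine ⟨resolventSet ℂ T, spectrum.isOpen_resolventSet T, hl, fun m => -resolvent T m y, ?_, ?_⟩
  · refine DifferentiableOn.analyticOnNhd (fun m hm => ?_) (spectrum.isOpen_resolventSet T)
    have resolvent_differentiable : DifferentiableAt ℂ (resolvent T) m :=
      (spectrum.hasDerivAt_resolvent_const_left hm).differentiableAt
    exact (resolvent_differentiable.clm_apply
      (differentiableAt_const y)).neg.differentiableWithinAt
  · intro m hm
    have right_inverse : (algebraMap ℂ (E →L[ℂ] E) m - T) * resolvent T m = 1 :=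
      Ring.mul_inverse_cancel _ hm
    calc T (-resolvent T m y) - m • -resolvent T m y
        = ((algebraMap ℂ (E →L[ℂ] E) m - T) * resolvent T m) y := by
          simp only [Algebra.algebraMap_eq_smul_one, mul_apply_eq_comp, sub_apply, smul_apply,
            one_apply_eq_self, map_neg, smul_neg]
          abel
      _ = y := by rw [right_inverse, one_apply_eq_self]

end LocalSpectrum

/-- `S` is the unilateral weighted shift on `ℓᵖ(ℕ, H)` with operator weights `A`, characterised
through its coordinates: `S (x₀, x₁, …) = (0, A₀ x₀, A₁ x₁, …)`. -/
structure IsWeightedShift {H : Type*} [NormedAddCommGroup H] [NormedSpace ℂ H] {p : ℝ≥0∞}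
    [Fact (1 ≤ p)] (A : ℕ → H →L[ℂ] H)
    (S : lp (fun _ : ℕ => H) p →L[ℂ] lp (fun _ : ℕ => H) p) : Prop where
  apply_zero (x : lp (fun _ : ℕ => H) p) : S x 0 = 0
  apply_succ (x : lp (fun _ : ℕ => H) p) (n : ℕ) : S x (n + 1) = A n (x n)

namespace IsWeightedShift

section Banach

variable {H : Type*} [NormedAddCommGroup H] [NormedSpace ℂ H] [CompleteSpace H] {p : ℝ≥0∞}
  [Fact (1 ≤ p)] {A : ℕ → H →L[ℂ] H} {S : lp (fun _ : ℕ => H) p →L[ℂ] lp (fun _ : ℕ => H) p}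

lemma apply_eq_zero_of_zero_mem_localResolventSet (hS : IsWeightedShift A S) (n : ℕ)
    (y : lp (fun _ : ℕ => H) p) (hy : 0 ∈ localResolventSet S y) : y n = 0 := by
  induction n generalizing y with
  | zero =>
    obtain ⟨z, -, rfl⟩ := exists_mem_localResolventSet_apply_sub_smul_eq hy
    simp [hS.apply_zero]
  | succ n ih =>
    obtain ⟨z, hz, rfl⟩ := exists_mem_localResolventSet_apply_sub_smul_eq hy
    simp [hS.apply_succ, ih z hz]

theorem zero_mem_localSpectrum (hS : IsWeightedShift A S) {y : lp (fun _ : ℕ => H) p}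
    (hy : y ≠ 0) : 0 ∈ localSpectrum S y := fun h0 =>
  hy (lp.ext (funext fun n => hS.apply_eq_zero_of_zero_mem_localResolventSet n y h0))

end Banach

end IsWeightedShift

section InverseWeights

variable {H : Type*} [NormedAddCommGroup H] [InnerProductSpace ℂ H]

lemma wBi_succ_apply (A : ℕ → (H →L[ℂ] H)ˣ) (n : ℕ) (v : H) :
    wBi A (n + 1) ((A n : H →L[ℂ] H) v) = wBi A n v := by
  have wBi_succ_mul : wBi A (n + 1) * (A n : H →L[ℂ] H) = wBi A n := by
    simp [wBi, wB, mul_assoc]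
  rw [← wBi_succ_mul, mul_apply_eq_comp]

lemma wBi_injective (A : ℕ → (H →L[ℂ] H)ˣ) (n : ℕ) : Function.Injective (wBi A n) := by
  have left_inverse : (wB A n : H →L[ℂ] H) * wBi A n = 1 := by simp [wBi]
  exact Function.LeftInverse.injective fun v => DFunLike.congr_fun left_inverse v

end InverseWeights

section Hilbert

variable {H : Type*} [NormedAddCommGroup H] [InnerProductSpace ℂ H] [CompleteSpace H]
  {p : ℝ≥0∞} [Fact (1 ≤ p)] {A : ℕ → (H →L[ℂ] H)ˣ} {x : H} {μ : ℂ}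

lemma summable_norm_adjoint_wBi_mul_pow (hx : x ≠ 0) (hμ : (‖μ‖₊ : ℝ≥0∞) < R2minus A) :
    Summable fun n => ‖ContinuousLinearMap.adjoint (wBi A n) x‖ * ‖μ‖ ^ n := by
  have R2minus_le_radius :
      R2minus A ≤ (seriesOfCoeff fun n => ContinuousLinearMap.adjoint (wBi A n) x).radius := by
    rw [radius_seriesOfCoeff]
    exact iInf₂_le x hx
  simpa using
    (seriesOfCoeff _).summable_norm_mul_pow (hμ.trans_le R2minus_le_radius)

lemma summable_pow_smul_inner_wBi (hx : x ≠ 0) (hμ : (‖μ‖₊ : ℝ≥0∞) < R2minus A)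
    (v : lp (fun _ : ℕ => H) p) :
    Summable fun n => μ ^ n • inner ℂ x (wBi A n (v n)) := by
  have hp : p ≠ 0 := (zero_lt_one.trans_le (Fact.out : 1 ≤ p)).ne'
  refine .of_norm_bounded ((summable_norm_adjoint_wBi_mul_pow hx hμ).mul_right ‖v‖) fun n => ?_
  rw [← ContinuousLinearMap.adjoint_inner_left, norm_smul, norm_pow]
  calc ‖μ‖ ^ n * ‖inner ℂ (ContinuousLinearMap.adjoint (wBi A n) x) (v n)‖
      ≤ ‖μ‖ ^ n * (‖ContinuousLinearMap.adjoint (wBi A n) x‖ * ‖v‖) := by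
        gcongr
        exact (norm_inner_le_norm _ _).trans
          (mul_le_mul_of_nonneg_left (lp.norm_apply_le_norm hp v n) (norm_nonneg _))
    _ = ‖ContinuousLinearMap.adjoint (wBi A n) x‖ * ‖μ‖ ^ n * ‖v‖ := by ring

namespace IsWeightedShift

variable {S : lp (fun _ : ℕ => H) p →L[ℂ] lp (fun _ : ℕ => H) p}

theorem hasSum_pow_smul_inner_wBi_apply_sub_smul
    (hS : IsWeightedShift (fun n => (A n : H →L[ℂ] H)) S) (hx : x ≠ 0)
    (hμ : (‖μ‖₊ : ℝ≥0∞) < R2minus A) (v : lp (fun _ : ℕ => H) p) :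
    HasSum (fun n => μ ^ n • inner ℂ x (wBi A n ((S v - μ • v) n))) 0 := by
  obtain ⟨s, hs⟩ := summable_pow_smul_inner_wBi hx hμ v
  have sum_shift : HasSum (fun n => μ ^ n • inner ℂ x (wBi A n (S v n))) (μ • s) := by
    rw [← hasSum_nat_add_iff' 1]
    simpa [hS.apply_zero, hS.apply_succ, wBi_succ_apply, pow_succ', mul_assoc]
      using hs.const_smul μ
  have inner_sub_smul (n : ℕ) : inner ℂ x (wBi A n ((S v - μ • v) n)) =
      inner ℂ x (wBi A n (S v n)) - μ * inner ℂ x (wBi A n (v n)) := by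
    rw [lp.coeFn_sub, lp.coeFn_smul, Pi.sub_apply, Pi.smul_apply, map_sub, map_smul,
      inner_sub_right, inner_smul_right]
  simp only [inner_sub_smul]
  simpa [mul_sub, mul_left_comm] using sum_shift.sub (hs.const_smul μ)

theorem eq_zero_of_mem_localResolventSet (hS : IsWeightedShift (fun n => (A n : H →L[ℂ] H)) S)
    (hμ : (‖μ‖₊ : ℝ≥0∞) < R2minus A) {y : lp (fun _ : ℕ => H) p}
    (hy : μ ∈ localResolventSet S y) : y = 0 := by
  have inner_eq_zero {x : H} (hx : x ≠ 0) (n : ℕ) : inner ℂ x (wBi A n (y n)) = 0 := by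
    refine eq_zero_of_eventually_hasSum_zero (z₀ := μ)
      (a := fun n => inner ℂ x (wBi A n (y n))) ?_ n
    have lt_R2minus : ∀ᶠ m in 𝓝 μ, (‖m‖₊ : ℝ≥0∞) < R2minus A :=
      (ENNReal.continuous_coe.comp continuous_nnnorm).continuousAt.eventually_lt_const hμ
    filter_upwards [(isOpen_localResolventSet S y).mem_nhds hy, lt_R2minus] with m hm hmR
    obtain ⟨v, rfl⟩ := exists_apply_sub_smul_eq_of_mem_localResolventSet hm
    exact hS.hasSum_pow_smul_inner_wBi_apply_sub_smul hx hmR v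
  refine lp.ext (funext fun n => (map_eq_zero_iff _ (wBi_injective A n)).1 ?_)
  by_contra hne
  exact hne (inner_self_eq_zero.1 (inner_eq_zero hne n))

theorem closedDisc_subset_localSpectrum (hS : IsWeightedShift (fun n => (A n : H →L[ℂ] H)) S)
    {y : lp (fun _ : ℕ => H) p} (hy : y ≠ 0) :
    {l : ℂ | (‖l‖₊ : ℝ≥0∞) ≤ R2minus A} ⊆ localSpectrum S y := by
  intro l hl
  rcases eq_or_ne l 0 with rfl | hl0
  · exact hS.zero_mem_localSpectrum hy
  have ball_subset : Metric.ball 0 ‖l‖ ⊆ localSpectrum S y := fun m hm hmy =>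
    hy (hS.eq_zero_of_mem_localResolventSet
      ((ENNReal.coe_lt_coe.2 (mem_ball_zero_iff.1 hm)).trans_le hl) hmy)
  refine (isClosed_localSpectrum S y).closure_subset_iff.2 ball_subset ?_
  rw [closure_ball _ (norm_ne_zero_iff.2 hl0)]
  simp

end IsWeightedShift

end Hilbert

theorem stmt10_general {H : Type*} [NormedAddCommGroup H] [InnerProductSpace ℂ H]
    [CompleteSpace H] {p : ℝ≥0∞} [Fact (1 ≤ p)] {A : ℕ → (H →L[ℂ] H)ˣ}
    {S : lp (fun _ : ℕ => H) p →L[ℂ] lp (fun _ : ℕ => H) p}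
    (hS : IsWeightedShift (fun n => (A n : H →L[ℂ] H)) S) :
    (∀ y : lp (fun _ : ℕ => H) p, y ≠ 0 →
      {l : ℂ | (‖l‖₊ : ℝ≥0∞) ≤ R2minus A} ⊆ localSpectrum S y) ∧
    (spectralRadius ℂ S = R2minus A →
      ∀ y : lp (fun _ : ℕ => H) p, y ≠ 0 → localSpectrum S y = spectrum ℂ S) := by
  refine ⟨fun y hy => hS.closedDisc_subset_localSpectrum hy, fun hr y hy => ?_⟩
  refine (localSpectrum_subset_spectrum S y).antisymm fun l hl => ?_
  have norm_le_radius : (‖l‖₊ : ℝ≥0∞) ≤ spectralRadius ℂ S :=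
    le_iSup₂ (f := fun (k : ℂ) (_ : k ∈ spectrum ℂ S) => (‖k‖₊ : ℝ≥0∞)) l hl
  exact hS.closedDisc_subset_localSpectrum hy (norm_le_radius.trans_eq hr)

theorem stmt10 {H : Type*} [NormedAddCommGroup H] [InnerProductSpace ℂ H] [CompleteSpace H]
    (A : ℕ → (H →L[ℂ] H)ˣ)
    (hbdd : ∃ C : ℝ, ∀ n, ‖(A n : H →L[ℂ] H)‖ ≤ C)
    (S : lp (fun _ : ℕ => H) 2 →L[ℂ] lp (fun _ : ℕ => H) 2)
    (hS0 : ∀ x : lp (fun _ : ℕ => H) 2, S x 0 = 0)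
    (hS : ∀ (x : lp (fun _ : ℕ => H) 2) (n : ℕ), S x (n + 1) = (A n : H →L[ℂ] H) (x n)) :
    (∀ y : lp (fun _ : ℕ => H) 2, y ≠ 0 →
      {l : ℂ | (‖l‖₊ : ℝ≥0∞) ≤ R2minus A} ⊆ localSpectrum S y) ∧
    (spectralRadius ℂ S = R2minus A →
      ∀ y : lp (fun _ : ℕ => H) 2, y ≠ 0 → localSpectrum S y = spectrum ℂ S) := by
  exact stmt10_general ⟨hS0, hS⟩
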